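/- Holomorphy in the chart r6: fix t, s ∈ ℂ with t, s ∉ {0,1} and t ≠ s; then there exists a polynomial P in four variables with complex coefficients such that for all complex (q1,p1,q2,p2) with q1 ≠ 0, q2 ∉ {0,1,t,s} and q2 + 1/q1 ∉ {0,1,t,s}, one has H1(ψ(q1,p1,q2,p2), t, s) = P(q1, p1 + p2/q1², q2 + 1/q1, p2). That is, the polynomial Hamiltonian obtained from H1 by φ1 becomes again polynomial in the coordinates (x6,y6,z6,w6) = (q1, p1 + p2/q1², q2 + 1/q1, p2). -/

import Mathlib

/-- The quadratic form `B(q,p)` appearing in the Garnier Hamiltonian, with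
`κ = ((κ0+κ1+θ1+θ2-1)² - κ∞²)/4`. -/
noncomputable def garnierB (κ0 κ1 κinf θ1 θ2 t s q p : ℂ) : ℂ :=
  p ^ 2 + (((κ0 + κ1 + θ1 + θ2 - 1) ^ 2 - κinf ^ 2) / 4) / (q * (q - 1)) -
    ((θ1 - 1) / (q - t) + θ2 / (q - s) + κ0 / q + κ1 / (q - 1)) * p

/-- The Hamiltonian `H1` of the Garnier system in two variables. -/
noncomputable def garnierH1 (κ0 κ1 κinf θ1 θ2 q1 p1 q2 p2 t s : ℂ) : ℂ :=
  -(q1 * (q1 - 1) * (q1 - t) * (q1 - s) * (q2 - t)) /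
      ((q1 - q2) * t * (t - 1) * (t - s)) *
      garnierB κ0 κ1 κinf θ1 θ2 t s q1 p1 -
    (q2 * (q2 - 1) * (q2 - t) * (q2 - s) * (q1 - t)) /
      ((q2 - q1) * t * (t - 1) * (t - s)) *
      garnierB κ0 κ1 κinf θ1 θ2 t s q2 p2

/-- The inverse ψ of the symplectic transformation φ1, written componentwise:
`ψ(Q1,P1,Q2,P2) = (Q2 + 1/Q1, Q1(c - P1·Q1), Q2, P2 - Q1(c - P1·Q1))`. -/
noncomputable def psi (c : ℂ) : ℂ × ℂ × ℂ × ℂ → ℂ × ℂ × ℂ × ℂ :=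
  fun (Q1, P1, Q2, P2) =>
    (Q2 + 1 / Q1, Q1 * (c - P1 * Q1), Q2, P2 - Q1 * (c - P1 * Q1))

/-- `H1` evaluated on a tuple of canonical variables. -/
noncomputable def garnierH1' (κ0 κ1 κinf θ1 θ2 : ℂ) (v : ℂ × ℂ × ℂ × ℂ)
    (t s : ℂ) : ℂ :=
  garnierH1 κ0 κ1 κinf θ1 θ2 v.1 v.2.1 v.2.2.1 v.2.2.2 t s

/-!
In the chart coordinates `x = q1`, `y = p1 + p2 / q1 ^ 2`, `z = q2 + 1 / q1`, `w = p2`, the map `ψ`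
sends the two particles to `(z, w - m)` and `(z - 1 / x, m)` with `m = x (x y - c)`. Clearing the
denominators of `B` gives `F(q, p) = f(q) p² - g(q) p + h(q)` with `deg f = 4`, `deg g ≤ 3`,
`deg h ≤ 2`, and up to a constant `H1` is
`x ((z - t) F(z - 1 / x, m) - (z - 1 / x - t) F(z, w - m))`.
The second summand is visibly polynomial. In the first, each of `x³ f(z - 1 / x)`,
`x² g(z - 1 / x)`, `x h(z - 1 / x)` has at most a simple pole at `x = 0`, whose residue is up to
sign the top coefficient. The total residue is a quadratic in `x y - c`; since `c` is a root of
`f₄ c² - g₃ c + h₂`, this quadratic is divisible by `x`.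
-/

open Polynomial

section Pole

variable {R A : Type*} [CommRing R] [CommRing A] [Algebra R A] (S : Subalgebra R A) {x u z : A}

theorem pow_mul_sub_pow_mem (hx : x ∈ S) (hz : z ∈ S) (hxu : x * u = 1) {k d : ℕ} (hkd : k ≤ d) :
    x ^ d * (z - u) ^ k ∈ S := by
  obtain ⟨e, rfl⟩ := Nat.exists_eq_add_of_le hkd
  have clear : x ^ (k + e) * (z - u) ^ k = x ^ e * (x * z - 1) ^ k := by
    rw [← hxu, ← mul_sub, mul_pow]
    ring
  rw [clear]
  exact mul_mem (pow_mem hx e) (pow_mem (sub_mem (mul_mem hx hz) (one_mem S)) k)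

theorem pow_mul_sub_pow_succ_sub_mem (hx : x ∈ S) (hz : z ∈ S) (hxu : x * u = 1) (d : ℕ) :
    x ^ d * (z - u) ^ (d + 1) - (-1) ^ (d + 1) * u ∈ S := by
  have hbase : x * z - 1 ∈ S := sub_mem (mul_mem hx hz) (one_mem S)
  have factor : x ^ d * (z - u) ^ (d + 1) - (-1) ^ (d + 1) * u =
      z * ∑ i ∈ Finset.range (d + 1), (x * z - 1) ^ i * (-1) ^ (d + 1 - 1 - i) :=
    calc
      _ = u * ((x * z - 1) ^ (d + 1) - (-1) ^ (d + 1)) := by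
        have clear : (x * z - 1) ^ (d + 1) = x ^ (d + 1) * (z - u) ^ (d + 1) := by
          rw [← hxu, ← mul_sub, mul_pow]
        rw [clear]
        linear_combination (-x ^ d * (z - u) ^ (d + 1)) * hxu
      _ = _ := by
        rw [← (Commute.all (x * z - 1) (-1)).mul_geom_sum₂]
        linear_combination
          (z * ∑ i ∈ Finset.range (d + 1), (x * z - 1) ^ i * (-1) ^ (d + 1 - 1 - i)) * hxu
  rw [factor]
  exact mul_mem hz <| sum_mem fun i _ =>
    mul_mem (pow_mem hbase i) (pow_mem (neg_mem (one_mem S)) _)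

theorem pow_mul_aeval_sub_sub_mem (hx : x ∈ S) (hz : z ∈ S) (hxu : x * u = 1) {f : R[X]} {d : ℕ}
    (hf : f.natDegree ≤ d + 1) :
    x ^ d * aeval (z - u) f - f.coeff (d + 1) • ((-1) ^ (d + 1) * u) ∈ S := by
  have expand : x ^ d * aeval (z - u) f - f.coeff (d + 1) • ((-1) ^ (d + 1) * u) =
      ∑ k ∈ Finset.range (d + 1), f.coeff k • (x ^ d * (z - u) ^ k) +
        f.coeff (d + 1) • (x ^ d * (z - u) ^ (d + 1) - (-1) ^ (d + 1) * u) := by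
    rw [aeval_eq_sum_range' (Nat.lt_succ_of_le hf), Finset.sum_range_succ, mul_add,
      Finset.mul_sum, smul_sub]
    simp only [mul_smul_comm, add_sub_assoc]
  rw [expand]
  refine add_mem (sum_mem fun k hk => S.smul_mem ?_ _)
    (S.smul_mem (pow_mul_sub_pow_succ_sub_mem S hx hz hxu d) _)
  exact pow_mul_sub_pow_mem S hx hz hxu (Nat.lt_succ_iff.mp (Finset.mem_range.mp hk))

/-- The quadratic polynomial `f(q) p² - g(q) p + h(q)` in a momentum `p`, with coefficients
polynomial in the position `q`; the shape of a one-particle Garnier Hamiltonian after its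
denominators are cleared. -/
noncomputable def momentumQuadratic (f g h : R[X]) (q p : A) : A :=
  aeval q f * p ^ 2 - aeval q g * p + aeval q h

theorem momentumQuadratic_mem (f g h : R[X]) {q p : A} (hq : q ∈ S) (hp : p ∈ S) :
    momentumQuadratic f g h q p ∈ S :=
  have aeval_mem (k : R[X]) : aeval q k ∈ S :=
    Algebra.adjoin_le (Set.singleton_subset_iff.2 hq) (aeval_mem_adjoin_singleton R q)
  add_mem (sub_mem (mul_mem (aeval_mem f) (pow_mem hp 2)) (mul_mem (aeval_mem g) hp)) (aeval_mem h)

variable {f g h : R[X]} {c : R} {y w : A}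

theorem mul_momentumQuadratic_sub_mem (hf : f.natDegree ≤ 4) (hg : g.natDegree ≤ 3)
    (hh : h.natDegree ≤ 2) (hc : f.coeff 4 * c ^ 2 - g.coeff 3 * c + h.coeff 2 = 0)
    (hx : x ∈ S) (hy : y ∈ S) (hz : z ∈ S) (hxu : x * u = 1) :
    x * momentumQuadratic f g h (z - u) (x * (x * y - algebraMap R A c)) ∈ S := by
  set n : A := x * y - algebraMap R A c with hn
  have hnS : n ∈ S := sub_mem (mul_mem hx hy) (S.algebraMap_mem c)
  have hfS := pow_mul_aeval_sub_sub_mem S hx hz hxu hf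
  have hgS := pow_mul_aeval_sub_sub_mem S hx hz hxu hg
  have hhS := pow_mul_aeval_sub_sub_mem S hx hz hxu hh
  have residue : u * (f.coeff 4 • n ^ 2 + g.coeff 3 • n + h.coeff 2 • 1) =
      y * (f.coeff 4 • (n - algebraMap R A c) + g.coeff 3 • 1) := by
    have hcA := congrArg (algebraMap R A) hc
    simp only [map_add, map_sub, map_mul, map_pow, map_zero] at hcA
    simp only [Algebra.smul_def, hn]
    linear_combination u * hcA + (y * (algebraMap R A (f.coeff 4) *
      (x * y - 2 * algebraMap R A c) + algebraMap R A (g.coeff 3))) * hxu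
  have residue_mem : u * (f.coeff 4 • n ^ 2 + g.coeff 3 • n + h.coeff 2 • 1) ∈ S := by
    rw [residue]
    exact mul_mem hy (add_mem (S.smul_mem (sub_mem hnS (S.algebraMap_mem c)) _)
      (S.smul_mem (one_mem S) _))
  convert add_mem (add_mem (sub_mem (mul_mem (pow_mem hnS 2) hfS) (mul_mem hnS hgS)) hhS)
    residue_mem using 1
  simp only [momentumQuadratic, Algebra.smul_def]
  ring

theorem mul_momentumQuadratic_sub_momentumQuadratic_mem
    (hf : f.natDegree ≤ 4) (hg : g.natDegree ≤ 3) (hh : h.natDegree ≤ 2)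
    (hc : f.coeff 4 * c ^ 2 - g.coeff 3 * c + h.coeff 2 = 0) (t : R)
    (hx : x ∈ S) (hy : y ∈ S) (hz : z ∈ S) (hw : w ∈ S) (hxu : x * u = 1) :
    x * ((z - algebraMap R A t) *
          momentumQuadratic f g h (z - u) (x * (x * y - algebraMap R A c)) -
        (z - u - algebraMap R A t) *
          momentumQuadratic f g h z (w - x * (x * y - algebraMap R A c))) ∈ S := by
  have hzt : z - algebraMap R A t ∈ S := sub_mem hz (S.algebraMap_mem t)
  have hm : x * (x * y - algebraMap R A c) ∈ S :=
    mul_mem hx (sub_mem (mul_mem hx hy) (S.algebraMap_mem c))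
  convert sub_mem
    (mul_mem hzt (mul_momentumQuadratic_sub_mem S hf hg hh hc hx hy hz hxu))
    (mul_mem (sub_mem (mul_mem hx hzt) (one_mem S))
      (momentumQuadratic_mem S f g h hz (sub_mem hw hm))) using 1
  linear_combination
    momentumQuadratic f g h z (w - x * (x * y - algebraMap R A c)) * hxu

end Pole

section PolynomialFunctions

/-- The algebra of functions on a set `U` of points of the affine space `σ → R` that are
restrictions of polynomials. -/
noncomputable def polynomialFunctionsOn {σ R : Type*} [CommRing R] (U : Set (σ → R)) :
    Subalgebra R (U → R) :=
  (MvPolynomial.aeval fun i (v : U) => v.1 i).range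

variable {σ R : Type*} [CommRing R] {U : Set (σ → R)}

theorem coord_mem_polynomialFunctionsOn (i : σ) :
    (fun v : U => v.1 i) ∈ polynomialFunctionsOn U :=
  ⟨MvPolynomial.X i, MvPolynomial.aeval_X _ i⟩

theorem exists_eval_eq_of_mem_polynomialFunctionsOn {φ : U → R}
    (hφ : φ ∈ polynomialFunctionsOn U) :
    ∃ P : MvPolynomial σ R, ∀ v : U, φ v = MvPolynomial.eval v.1 P := by
  obtain ⟨P, rfl⟩ := hφ
  exact ⟨P, fun v =>
    MvPolynomial.comp_aeval_apply (fun i (v : U) => v.1 i) (Pi.evalAlgHom R (fun _ : U => R) v) P⟩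

end PolynomialFunctions

theorem exists_mvPolynomial_eval_eq_momentumQuadratic {K : Type*} [Field K] {f g h : K[X]} {c : K}
    (hf : f.natDegree ≤ 4) (hg : g.natDegree ≤ 3) (hh : h.natDegree ≤ 2)
    (hc : f.coeff 4 * c ^ 2 - g.coeff 3 * c + h.coeff 2 = 0) (t : K) :
    ∃ P : MvPolynomial (Fin 4) K, ∀ x y z w : K, x ≠ 0 →
      x * ((z - t) * momentumQuadratic f g h (z - x⁻¹) (x * (x * y - c)) -
          (z - x⁻¹ - t) * momentumQuadratic f g h z (w - x * (x * y - c))) =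
        MvPolynomial.eval ![x, y, z, w] P := by
  let U : Set (Fin 4 → K) := {v | v 0 ≠ 0}
  have coord_mem := coord_mem_polynomialFunctionsOn (U := U)
  have hxu : (fun v : U => v.1 0) * (fun v : U => (v.1 0)⁻¹) = 1 :=
    funext fun v => mul_inv_cancel₀ v.2
  obtain ⟨P, hP⟩ := exists_eval_eq_of_mem_polynomialFunctionsOn <|
    mul_momentumQuadratic_sub_momentumQuadratic_mem (polynomialFunctionsOn U) hf hg hh hc t
      (coord_mem 0) (coord_mem 1) (coord_mem 2) (coord_mem 3) hxu
  refine ⟨P, fun x y z w hx => ?_⟩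
  simpa [momentumQuadratic, aeval_fn_apply] using hP ⟨![x, y, z, w], hx⟩

section Garnier

section Coefficients

variable {R : Type*} [CommRing R] (κ κ0 κ1 θ1 θ2 t s : R)

/-- The coefficient of `p ^ 2` in `q (q - 1) (q - t) (q - s) B(q, p)`. -/
noncomputable def garnierQuartic : R[X] :=
  X * (X - 1) * (X - C t) * (X - C s)

/-- The coefficient of `-p` in `q (q - 1) (q - t) (q - s) B(q, p)`. -/
noncomputable def garnierCubic : R[X] :=
  C (θ1 - 1) * (X * (X - 1) * (X - C s)) + C θ2 * (X * (X - 1) * (X - C t)) +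
    C κ0 * ((X - 1) * (X - C t) * (X - C s)) + C κ1 * (X * (X - C t) * (X - C s))

/-- The coefficient of `p ^ 0` in `q (q - 1) (q - t) (q - s) B(q, p)`. -/
noncomputable def garnierQuadratic : R[X] :=
  C κ * ((X - C t) * (X - C s))

theorem natDegree_garnierQuartic_le : (garnierQuartic t s).natDegree ≤ 4 := by
  unfold garnierQuartic
  compute_degree

theorem natDegree_garnierCubic_le : (garnierCubic κ0 κ1 θ1 θ2 t s).natDegree ≤ 3 := by
  unfold garnierCubic
  compute_degree

theorem natDegree_garnierQuadratic_le : (garnierQuadratic κ t s).natDegree ≤ 2 := by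
  unfold garnierQuadratic
  compute_degree

theorem coeff_garnierQuartic_four : (garnierQuartic t s).coeff 4 = 1 := by
  unfold garnierQuartic
  compute_degree!

theorem coeff_garnierCubic_three :
    (garnierCubic κ0 κ1 θ1 θ2 t s).coeff 3 = κ0 + κ1 + θ1 + θ2 - 1 := by
  unfold garnierCubic
  compute_degree!
  ring

theorem coeff_garnierQuadratic_two : (garnierQuadratic κ t s).coeff 2 = κ := by
  unfold garnierQuadratic
  compute_degree!

end Coefficients

variable (κ0 κ1 κinf θ1 θ2 t s : ℂ)

/-- The polynomial `q (q - 1) (q - t) (q - s) B(q, p)`. -/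
noncomputable def garnierBCleared (q p : ℂ) : ℂ :=
  momentumQuadratic (garnierQuartic t s) (garnierCubic κ0 κ1 θ1 θ2 t s)
    (garnierQuadratic (((κ0 + κ1 + θ1 + θ2 - 1) ^ 2 - κinf ^ 2) / 4) t s) q p

variable {t s} in
theorem mul_garnierB_eq_garnierBCleared {q : ℂ} (p : ℂ)
    (hq0 : q ≠ 0) (hq1 : q ≠ 1) (hqt : q ≠ t) (hqs : q ≠ s) :
    q * (q - 1) * (q - t) * (q - s) * garnierB κ0 κ1 κinf θ1 θ2 t s q p =
      garnierBCleared κ0 κ1 κinf θ1 θ2 t s q p := by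
  have hq1' := sub_ne_zero.2 hq1
  have hqt' := sub_ne_zero.2 hqt
  have hqs' := sub_ne_zero.2 hqs
  simp only [garnierB, garnierBCleared, momentumQuadratic, garnierQuartic, garnierCubic,
    garnierQuadratic, map_add, map_sub, map_mul, map_one, aeval_X, aeval_C, Algebra.algebraMap_self,
    RingHom.id_apply]
  field_simp
  ring

variable {t s} in
theorem garnierH1_eq_garnierBCleared {q1 q2 : ℂ} (p1 p2 : ℂ)
    (hq1_0 : q1 ≠ 0) (hq1_1 : q1 ≠ 1) (hq1_t : q1 ≠ t) (hq1_s : q1 ≠ s)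
    (hq2_0 : q2 ≠ 0) (hq2_1 : q2 ≠ 1) (hq2_t : q2 ≠ t) (hq2_s : q2 ≠ s) :
    garnierH1 κ0 κ1 κinf θ1 θ2 q1 p1 q2 p2 t s =
      (t * (t - 1) * (t - s))⁻¹ * ((q1 - q2)⁻¹ *
        ((q1 - t) * garnierBCleared κ0 κ1 κinf θ1 θ2 t s q2 p2 -
          (q2 - t) * garnierBCleared κ0 κ1 κinf θ1 θ2 t s q1 p1)) := by
  rw [← mul_garnierB_eq_garnierBCleared κ0 κ1 κinf θ1 θ2 p1 hq1_0 hq1_1 hq1_t hq1_s,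
    ← mul_garnierB_eq_garnierBCleared κ0 κ1 κinf θ1 θ2 p2 hq2_0 hq2_1 hq2_t hq2_s, garnierH1,
    ← neg_sub q1 q2]
  simp only [div_eq_mul_inv, mul_inv, inv_neg, neg_mul]
  ring

theorem psi_eq_chart_r6 (c p1 q2 p2 : ℂ) {q1 : ℂ} (hq1 : q1 ≠ 0) :
    psi c (q1, p1, q2, p2) =
      (q2 + 1 / q1, p2 - q1 * (q1 * (p1 + p2 / q1 ^ 2) - c),
        q2 + 1 / q1 - q1⁻¹, q1 * (q1 * (p1 + p2 / q1 ^ 2) - c)) := by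
  simp only [psi, Prod.mk.injEq, true_and]
  refine ⟨?_, ?_, ?_⟩ <;> field_simp <;> ring

theorem exists_mvPolynomial_eval_eq_garnierBCleared :
    ∃ P : MvPolynomial (Fin 4) ℂ, ∀ x y z w : ℂ, x ≠ 0 →
      x * ((z - t) * garnierBCleared κ0 κ1 κinf θ1 θ2 t s (z - x⁻¹)
            (x * (x * y - (κ0 + κ1 - κinf + θ1 + θ2 - 1) / 2)) -
          (z - x⁻¹ - t) * garnierBCleared κ0 κ1 κinf θ1 θ2 t s z
            (w - x * (x * y - (κ0 + κ1 - κinf + θ1 + θ2 - 1) / 2))) =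
        MvPolynomial.eval ![x, y, z, w] P := by
  refine exists_mvPolynomial_eval_eq_momentumQuadratic (natDegree_garnierQuartic_le t s)
    (natDegree_garnierCubic_le κ0 κ1 θ1 θ2 t s) (natDegree_garnierQuadratic_le _ t s) ?_ t
  rw [coeff_garnierQuartic_four, coeff_garnierCubic_three, coeff_garnierQuadratic_two]
  ring

end Garnier

/-- Holomorphy in the chart `r6`: the polynomial Hamiltonian obtained from `H1`
by φ1 becomes again polynomial in the coordinates
`(x6,y6,z6,w6) = (q1, p1 + p2/q1², q2 + 1/q1, p2)`. -/
theorem garnierH1_chart_r6 (κ0 κ1 κinf θ1 θ2 t s : ℂ)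
    (ht0 : t ≠ 0) (ht1 : t ≠ 1) (hs0 : s ≠ 0) (hs1 : s ≠ 1) (hts : t ≠ s) :
    ∃ P : MvPolynomial (Fin 4) ℂ, ∀ q1 p1 q2 p2 : ℂ,
      q1 ≠ 0 → q2 ≠ 0 → q2 ≠ 1 → q2 ≠ t → q2 ≠ s →
      q2 + 1 / q1 ≠ 0 → q2 + 1 / q1 ≠ 1 → q2 + 1 / q1 ≠ t → q2 + 1 / q1 ≠ s →
      garnierH1' κ0 κ1 κinf θ1 θ2
          (psi ((κ0 + κ1 - κinf + θ1 + θ2 - 1) / 2) (q1, p1, q2, p2)) t s =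
        MvPolynomial.eval ![q1, p1 + p2 / q1 ^ 2, q2 + 1 / q1, p2] P := by
  obtain ⟨P, hP⟩ := exists_mvPolynomial_eval_eq_garnierBCleared κ0 κ1 κinf θ1 θ2 t s
  refine ⟨MvPolynomial.C (t * (t - 1) * (t - s))⁻¹ * P, ?_⟩
  intro q1 p1 q2 p2 hq1 hq2_0 hq2_1 hq2_t hq2_s hz_0 hz_1 hz_t hz_s
  have hq2 : q2 + 1 / q1 - q1⁻¹ = q2 := by ring
  have gap : (q2 + 1 / q1 - (q2 + 1 / q1 - q1⁻¹))⁻¹ = q1 := by rw [sub_sub_cancel, inv_inv]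
  rw [map_mul, MvPolynomial.eval_C, ← hP q1 _ _ p2 hq1, psi_eq_chart_r6 _ _ _ _ hq1, garnierH1',
    garnierH1_eq_garnierBCleared κ0 κ1 κinf θ1 θ2 _ _ hz_0 hz_1 hz_t hz_s
      (by rwa [hq2]) (by rwa [hq2]) (by rwa [hq2]) (by rwa [hq2]), gap]
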